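/- Let χ be a complex character of G with χ|_K ≠ 1_K, and define Θ_χ : ℂP̃₀ → ℂP̃₁ by Θ_χ y = e_χ(y ∨ u) for y ∈ P̃₀. Then there is a unique H_χ ∈ P̃_{a−1,b,0} such that for every y ∈ P̃₀ one has Θ_χ y ≠ 0 if and only if y ⊆ H_χ. Moreover, Θ_χ restricts to a linear bijection from ℂP(x ∩ H_χ, H_χ) onto M(χ), and, with L₁, L₂, R₁, R₂, E*_{i,j} the matrices attached to P(x ∩ H_χ, H_χ) with respect to x ∩ H_χ, the following hold on ℂP(x ∩ H_χ, H_χ) for all 0 ≤ i ≤ a−1 and 0 ≤ j ≤ b: L̃₁Θ_χ = qΘ_χL₁; L̃₂Θ_χ = qΘ_χL₂; L̃₃Θ_χ = 0; R̃₁Θ_χ = Θ_χR₁; R̃₂Θ_χ = Θ_χR₂; R̃₃Θ_χ = 0; Ẽ*_{i,j,0}Θ_χ = Ẽ*_{a,j,0}Θ_χ = Ẽ*_{a,j,1}Θ_χ = 0; Ẽ*_{i,j,1}Θ_χ = Θ_χE*_{i,j}. -/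

import Mathlib

open Module

/-- The q-Pochhammer symbol `(q;q)_n = ∏_{ℓ=0}^{n-1} (1 - q^ℓ)`. -/
noncomputable def qPoch (q : ℂ) (n : ℕ) : ℂ := ∏ l ∈ Finset.range n, (1 - q ^ l)

/-- The q-Pochhammer symbol with an integer index (junk value for negative index). -/
noncomputable def qPochZ (q : ℂ) (n : ℤ) : ℂ := qPoch q n.toNat

/-- The Gaussian binomial coefficient `[m, n]_q`, with the convention that it
vanishes unless `0 ≤ n ≤ m`. -/
noncomputable def qGauss (q : ℂ) (m n : ℤ) : ℂ :=
  if 0 ≤ n ∧ n ≤ m then qPoch q m.toNat / (qPoch q n.toNat * qPoch q (m - n).toNat) else 0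

section Twisted

variable (F : Type) [Field F] [Fintype F] (n : ℕ)

/-- Membership of `y` in `P̃_{i,j,k}` (with respect to `x ⊆ H`). -/
def PtMem (x H : Submodule F (Fin n → F)) (i j k : ℤ) (y : Submodule F (Fin n → F)) : Prop :=
  (finrank F ↥(x ⊓ y) : ℤ) = i ∧ (finrank F ↥(H ⊓ y) : ℤ) = i + j ∧
    (finrank F y : ℤ) = i + j + k

open Classical in
/-- The diagonal matrix `Ẽ*_{i,j,k}`. -/
noncomputable def EstarT (x H : Submodule F (Fin n → F)) (i j k : ℤ) :
    Matrix (Submodule F (Fin n → F)) (Submodule F (Fin n → F)) ℂ :=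
  Matrix.diagonal fun y => if PtMem F n x H i j k y then 1 else 0

open Classical in
/-- The lowering matrix `L̃₁`. -/
noncomputable def LoneT (x H : Submodule F (Fin n → F)) :
    Matrix (Submodule F (Fin n → F)) (Submodule F (Fin n → F)) ℂ :=
  fun y z => if y ≤ z ∧ finrank F y + 1 = finrank F z ∧
    finrank F ↥(x ⊓ y) + 1 = finrank F ↥(x ⊓ z) ∧
    finrank F ↥(H ⊓ y) + 1 = finrank F ↥(H ⊓ z) then 1 else 0

open Classical in
/-- The lowering matrix `L̃₂`. -/
noncomputable def LtwoT (x H : Submodule F (Fin n → F)) :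
    Matrix (Submodule F (Fin n → F)) (Submodule F (Fin n → F)) ℂ :=
  fun y z => if y ≤ z ∧ finrank F y + 1 = finrank F z ∧
    finrank F ↥(x ⊓ y) = finrank F ↥(x ⊓ z) ∧
    finrank F ↥(H ⊓ y) + 1 = finrank F ↥(H ⊓ z) then 1 else 0

open Classical in
/-- The lowering matrix `L̃₃`. -/
noncomputable def LthreeT (x H : Submodule F (Fin n → F)) :
    Matrix (Submodule F (Fin n → F)) (Submodule F (Fin n → F)) ℂ :=
  fun y z => if y ≤ z ∧ finrank F y + 1 = finrank F z ∧
    finrank F ↥(x ⊓ y) = finrank F ↥(x ⊓ z) ∧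
    finrank F ↥(H ⊓ y) = finrank F ↥(H ⊓ z) then 1 else 0

open Classical in
/-- The raising matrix `R̃₁`. -/
noncomputable def RoneT (x H : Submodule F (Fin n → F)) :
    Matrix (Submodule F (Fin n → F)) (Submodule F (Fin n → F)) ℂ :=
  fun y z => if z ≤ y ∧ finrank F z + 1 = finrank F y ∧
    finrank F ↥(x ⊓ z) + 1 = finrank F ↥(x ⊓ y) ∧
    finrank F ↥(H ⊓ z) + 1 = finrank F ↥(H ⊓ y) then 1 else 0

open Classical in
/-- The raising matrix `R̃₂`. -/
noncomputable def RtwoT (x H : Submodule F (Fin n → F)) :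
    Matrix (Submodule F (Fin n → F)) (Submodule F (Fin n → F)) ℂ :=
  fun y z => if z ≤ y ∧ finrank F z + 1 = finrank F y ∧
    finrank F ↥(x ⊓ z) = finrank F ↥(x ⊓ y) ∧
    finrank F ↥(H ⊓ z) + 1 = finrank F ↥(H ⊓ y) then 1 else 0

open Classical in
/-- The raising matrix `R̃₃`. -/
noncomputable def RthreeT (x H : Submodule F (Fin n → F)) :
    Matrix (Submodule F (Fin n → F)) (Submodule F (Fin n → F)) ℂ :=
  fun y z => if z ≤ y ∧ finrank F z + 1 = finrank F y ∧
    finrank F ↥(x ⊓ z) = finrank F ↥(x ⊓ y) ∧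
    finrank F ↥(H ⊓ z) = finrank F ↥(H ⊓ y) then 1 else 0

open Classical in
/-- The diagonal matrix `E*_{i,j}` of `P(x', H')`, viewed inside `Mat_{P̃}(ℂ)`
(supported on the subspaces of `H'`). -/
noncomputable def EstarRel (x' H' : Submodule F (Fin n → F)) (i j : ℤ) :
    Matrix (Submodule F (Fin n → F)) (Submodule F (Fin n → F)) ℂ :=
  Matrix.diagonal fun y => if y ≤ H' ∧ (finrank F ↥(x' ⊓ y) : ℤ) = i ∧
    (finrank F y : ℤ) = i + j then 1 else 0

open Classical in
/-- The lowering matrix `L₁` of `P(x', H')`, viewed inside `Mat_{P̃}(ℂ)`. -/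
noncomputable def LoneRel (x' H' : Submodule F (Fin n → F)) :
    Matrix (Submodule F (Fin n → F)) (Submodule F (Fin n → F)) ℂ :=
  fun y z => if z ≤ H' ∧ y ≤ z ∧ finrank F y + 1 = finrank F z ∧
    finrank F ↥(x' ⊓ y) + 1 = finrank F ↥(x' ⊓ z) then 1 else 0

open Classical in
/-- The lowering matrix `L₂` of `P(x', H')`, viewed inside `Mat_{P̃}(ℂ)`. -/
noncomputable def LtwoRel (x' H' : Submodule F (Fin n → F)) :
    Matrix (Submodule F (Fin n → F)) (Submodule F (Fin n → F)) ℂ :=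
  fun y z => if z ≤ H' ∧ y ≤ z ∧ finrank F y + 1 = finrank F z ∧
    finrank F ↥(x' ⊓ y) = finrank F ↥(x' ⊓ z) then 1 else 0

open Classical in
/-- The raising matrix `R₁` of `P(x', H')`, viewed inside `Mat_{P̃}(ℂ)`. -/
noncomputable def RoneRel (x' H' : Submodule F (Fin n → F)) :
    Matrix (Submodule F (Fin n → F)) (Submodule F (Fin n → F)) ℂ :=
  fun y z => if y ≤ H' ∧ z ≤ y ∧ finrank F z + 1 = finrank F y ∧
    finrank F ↥(x' ⊓ z) + 1 = finrank F ↥(x' ⊓ y) then 1 else 0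

open Classical in
/-- The raising matrix `R₂` of `P(x', H')`, viewed inside `Mat_{P̃}(ℂ)`. -/
noncomputable def RtwoRel (x' H' : Submodule F (Fin n → F)) :
    Matrix (Submodule F (Fin n → F)) (Submodule F (Fin n → F)) ℂ :=
  fun y z => if y ≤ H' ∧ z ≤ y ∧ finrank F z + 1 = finrank F y ∧
    finrank F ↥(x' ⊓ z) = finrank F ↥(x' ⊓ y) then 1 else 0

end Twisted

section GroupPart

variable (F : Type) [Field F] [Fintype F] (n : ℕ)

/-- The subgroup `G` of `SL(Ṽ)` consisting of the elements fixing every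
vector of the hyperplane `H`. -/
noncomputable def Gsub (H : Submodule F (Fin n → F)) :
    Subgroup ((Fin n → F) ≃ₗ[F] (Fin n → F)) where
  carrier := {g | LinearEquiv.det g = 1 ∧ ∀ v ∈ H, g v = v}
  one_mem' := ⟨map_one _, fun v _ => rfl⟩
  mul_mem' := by
    rintro g h ⟨hg1, hg2⟩ ⟨hh1, hh2⟩
    refine ⟨by rw [map_mul, hg1, hh1, one_mul], fun v hv => ?_⟩
    show g (h v) = v
    rw [hh2 v hv, hg2 v hv]
  inv_mem' := by
    rintro g ⟨hg1, hg2⟩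
    refine ⟨by rw [map_inv, hg1, inv_one], fun v hv => ?_⟩
    show g.symm v = v
    conv_lhs => rw [← hg2 v hv]
    exact g.symm_apply_apply v

/-- The image of a subspace under a linear automorphism. -/
noncomputable def smap (g : (Fin n → F) ≃ₗ[F] (Fin n → F))
    (y : Submodule F (Fin n → F)) : Submodule F (Fin n → F) :=
  Submodule.map (g : (Fin n → F) →ₗ[F] (Fin n → F)) y

/-- The `χ`-homogeneous component of the span of the basis vectors indexed by `S`. -/
noncomputable def Mcomp (H : Submodule F (Fin n → F)) (χ : Gsub F n H →* ℂ)
    (S : Set (Submodule F (Fin n → F))) : Submodule ℂ (Submodule F (Fin n → F) → ℂ) where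
  carrier := {v | (∀ y, y ∉ S → v y = 0) ∧
      ∀ g : Gsub F n H, ∀ y : Submodule F (Fin n → F),
        v (smap F n ((g⁻¹ : Gsub F n H) : (Fin n → F) ≃ₗ[F] (Fin n → F)) y) = χ g * v y}
  zero_mem' := ⟨fun _ _ => rfl, fun g y => by simp⟩
  add_mem' := by
    rintro v w ⟨hv1, hv2⟩ ⟨hw1, hw2⟩
    refine ⟨fun y hy => by simp [hv1 y hy, hw1 y hy], fun g y => ?_⟩
    simp only [Pi.add_apply, hv2 g y, hw2 g y]
    ring
  smul_mem' := by
    rintro c v ⟨hv1, hv2⟩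
    refine ⟨fun y hy => by simp [hv1 y hy], fun g y => ?_⟩
    simp only [Pi.smul_apply, hv2 g y, smul_eq_mul]
    ring

open Classical in
/-- The characteristic vector (as a function) of a single subspace `y`. -/
noncomputable def delta (y z : Submodule F (Fin n → F)) : ℂ :=
  if z = y then 1 else 0

open Classical in
/-- The idempotent `e_χ = q^{-(a+b)} Σ_{g ∈ G} χ(g⁻¹) g` applied to a vector of `ℂP̃`. -/
noncomputable def echi (H : Submodule F (Fin n → F)) [Fintype (Gsub F n H)]
    (χ : Gsub F n H →* ℂ) (v : Submodule F (Fin n → F) → ℂ) :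
    Submodule F (Fin n → F) → ℂ := fun y =>
  ((Fintype.card F : ℂ) ^ (n - 1))⁻¹ *
    ∑ g : Gsub F n H, χ g⁻¹ *
      v (smap F n ((g⁻¹ : Gsub F n H) : (Fin n → F) ≃ₗ[F] (Fin n → F)) y)

open Classical in
/-- The linear map `Θ_χ : ℂP̃₀ → ℂP̃₁`, `Θ_χ y = e_χ(y ∨ u)`, as a matrix
(extended by zero on the basis vectors outside `ℂP̃₀`). -/
noncomputable def Theta (H : Submodule F (Fin n → F)) [Fintype (Gsub F n H)]
    (χ : Gsub F n H →* ℂ) (u : Submodule F (Fin n → F)) :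
    Matrix (Submodule F (Fin n → F)) (Submodule F (Fin n → F)) ℂ :=
  fun z y => if y ≤ H then echi F n H χ (delta F n (y ⊔ u)) z else 0

end GroupPart

/-- The condition `(g - id)(Ṽ) ⊆ x` defining the subgroup `K` of `G`. -/
def memK (F : Type) [Field F] [Fintype F] (n : ℕ) (x : Submodule F (Fin n → F))
    (g : (Fin n → F) ≃ₗ[F] (Fin n → F)) : Prop :=
  ∀ v : Fin n → F, g v - v ∈ x

/-!
Writing `H = ker f`, the group `G` consists of the transvections `v ↦ v + f v • h` with `h ∈ H`, so
`χ` is an additive character of `H`, and `H_χ` is the largest subspace on which it is trivial. As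
every character of a finite field is a multiplicative shift of a fixed nontrivial one, `H_χ` is a
hyperplane of `H` if `χ ≠ 1`; it does not contain `x` if `χ` is nontrivial on `K`.

The stabiliser in `G` of a subspace `y` not contained in `H` consists of the transvections with
`h ∈ H ⊓ y`, and every such `y` is `G`-conjugate to `(H ⊓ y) ⊔ u`. Hence a vector of `M(χ)` vanishes
at `y` unless `H ⊓ y ≤ H_χ`, and is determined by its coefficients at the subspaces `y ⊔ u` with
`y ≤ H_χ`. In these coordinates `Θ_χ` multiplies the coefficient of `y` by
`q ^ dim y / q ^ (a + b)`, so it is bijective.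

The matrices of `P̃` are `G`-invariant: they commute with `e_χ` and preserve equivariance under `χ`.
Their entries at `(y ⊔ u, z ⊔ u)` are those of the matrices of `P(x ⊓ H_χ, H_χ)` at `(y, z)`.
Raising `y ⊔ u` yields only subspaces containing `u`, so the raising identities can be compared
before `e_χ` is applied. Lowering `y ⊔ u` also yields subspaces without `u`, so there both sides are
compared at the coefficients that determine them, where the weights `q ^ dim y` produce the factor
`q`.
-/

section LinearAlgebra

variable {K V : Type*} [Field K] [AddCommGroup V] [Module K V]

theorem exists_dual_ker_eq_of_isCoatom {H : Submodule K V} (hH : IsCoatom H) :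
    ∃ f : Dual K V, f ≠ 0 ∧ LinearMap.ker f = H := by
  obtain ⟨f, hf, hle⟩ := H.exists_le_ker_of_lt_top hH.lt_top
  exact ⟨f, hf, (hH.le_iff.1 hle).resolve_left fun h => hf (LinearMap.ker_eq_top.1 h)⟩

variable [FiniteDimensional K V]

theorem finrank_eq_add_one_of_covBy {p q : Submodule K V} (h : p ⋖ q) :
    finrank K q = finrank K p + 1 := by
  obtain ⟨v, hvq, hvp⟩ := SetLike.exists_of_lt h.lt
  have hv : v ≠ 0 := fun h0 => hvp (h0 ▸ p.zero_mem)
  have hsup : p ⊔ K ∙ v = q :=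
    (h.eq_or_eq le_sup_left
      (sup_le h.le ((Submodule.span_singleton_le_iff_mem v q).2 hvq))).resolve_left
      fun h0 => hvp (h0 ▸ Submodule.mem_sup_right (Submodule.mem_span_singleton_self v))
  have hinf : p ⊓ K ∙ v = ⊥ := (Submodule.disjoint_span_singleton_of_notMem hvp).eq_bot
  have hdim := Submodule.finrank_sup_add_finrank_inf_eq p (K ∙ v)
  rwa [hsup, hinf, finrank_bot, add_zero, finrank_span_singleton hv] at hdim

theorem finrank_eq_finrank_inf_add_one {H z : Submodule K V} (hH : IsCoatom H) (hz : ¬ z ≤ H) :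
    finrank K z = finrank K ↥(H ⊓ z) + 1 := by
  refine finrank_eq_add_one_of_covBy (inf_covBy_of_covBy_sup_left ?_)
  rw [(hH.not_le_iff_codisjoint.1 hz).eq_top]
  exact covBy_top_iff.2 hH

theorem finrank_le_finrank_inf_add_one {H : Submodule K V} (hH : IsCoatom H)
    (z : Submodule K V) : finrank K z ≤ finrank K ↥(H ⊓ z) + 1 := by
  by_cases hz : z ≤ H
  · rw [inf_eq_right.2 hz]
    exact Nat.le_succ _
  · exact (finrank_eq_finrank_inf_add_one hH hz).le

theorem finrank_inf_eq_iff_le {H z : Submodule K V} :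
    finrank K ↥(H ⊓ z) = finrank K z ↔ z ≤ H :=
  ⟨fun h => inf_eq_right.1 (Submodule.eq_of_le_of_finrank_eq inf_le_right h),
    fun h => by rw [inf_eq_right.2 h]⟩

theorem isCoatom_and_isCompl_of_finrank {H U : Submodule K V}
    (hdim : finrank K V = finrank K H + 1) (hinf : finrank K ↥(H ⊓ U) = 0)
    (hU : finrank K U = 1) : IsCoatom H ∧ IsCompl H U := by
  have hHU : IsCompl H U := (Submodule.isCompl_iff_disjoint H U (by rw [hdim, hU])).2
    (disjoint_iff.2 (Submodule.finrank_eq_zero.1 hinf))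
  exact ⟨hHU.isCoatom_iff_isAtom.2 (Submodule.isAtom_iff_finrank_eq_one.2 hU), hHU⟩

end LinearAlgebra

section Complements

variable {L : Type*} [Lattice L] [BoundedOrder L] [IsModularLattice L] {H U x y z w : L}

theorem inf_sup_eq_inf_of_le (hHU : Disjoint H U) (hx : x ≤ H) (hy : y ≤ H) :
    x ⊓ (y ⊔ U) = x ⊓ y := by
  have hH : H ⊓ (y ⊔ U) = y := by
    rw [inf_comm, sup_inf_assoc_of_le U hy, hHU.symm.eq_bot, sup_bot_eq]
  rw [← inf_eq_left.2 hx, inf_assoc, hH, inf_assoc, inf_eq_right.2 hy]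

theorem inf_sup_eq_of_le (hHU : Disjoint H U) (hy : y ≤ H) : H ⊓ (y ⊔ U) = y := by
  rw [inf_sup_eq_inf_of_le hHU le_rfl hy, inf_eq_right.2 hy]

theorem inf_sup_eq_of_ge (hHU : Codisjoint H U) (hw : U ≤ w) : H ⊓ w ⊔ U = w := by
  rw [sup_comm, ← sup_inf_assoc_of_le H hw, hHU.symm.eq_top, top_inf_eq]

theorem sup_le_sup_iff_of_disjoint (hHU : Disjoint H U) (hy : y ≤ H) (hz : z ≤ H) :
    y ⊔ U ≤ z ⊔ U ↔ y ≤ z := by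
  refine ⟨fun h => ?_, fun h => sup_le_sup_right h U⟩
  rw [← inf_sup_eq_of_le hHU hy, ← inf_sup_eq_of_le hHU hz]
  exact inf_le_inf_left H h

open Classical in
theorem sum_eq_sum_sup_of_isCompl [Fintype L] {M : Type*} [AddCommMonoid M] (hHU : IsCompl H U)
    {f : L → M} (hf : ∀ w, f w ≠ 0 → U ≤ w) :
    ∑ w, f w = ∑ y with y ≤ H, f (y ⊔ U) := by
  rw [← Finset.sum_filter_of_ne fun w _ => hf w]
  refine Finset.sum_nbij' (H ⊓ ·) (· ⊔ U) ?_ ?_ ?_ ?_ ?_ <;>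
    simp only [Finset.mem_filter_univ]
  · exact fun w _ => inf_le_left
  · exact fun y _ => le_sup_right
  · exact fun w hw => inf_sup_eq_of_ge hHU.codisjoint hw
  · exact fun y hy => inf_sup_eq_of_le hHU.disjoint hy
  · exact fun w hw => by rw [inf_sup_eq_of_ge hHU.codisjoint hw]

theorem finrank_sup_of_isCompl {K V : Type*} [Field K] [AddCommGroup V] [Module K V]
    [FiniteDimensional K V] {H U y : Submodule K V} (hH : IsCoatom H) (hHU : IsCompl H U)
    (hy : y ≤ H) : finrank K ↥(y ⊔ U) = finrank K y + 1 := by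
  have hnot : ¬ y ⊔ U ≤ H := fun h =>
    hH.1 (eq_top_iff.2 (hHU.sup_eq_top ▸ sup_le le_rfl (le_sup_right.trans h)))
  rw [finrank_eq_finrank_inf_add_one hH hnot, inf_sup_eq_of_le hHU.disjoint hy]

end Complements

section AdditiveCharacters

variable {K V : Type*} [Field K] [AddCommGroup V] [Module K V]

/-- The largest subspace of `V` contained in the kernel of an additive character of `V`. -/
def charKernel {R : Type*} [CommMonoid R] (ψ : AddChar V R) : Submodule K V where
  carrier := {v | ∀ c : K, ψ (c • v) = 1}
  zero_mem' c := by rw [smul_zero, ψ.map_zero_eq_one]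
  add_mem' hv hw c := by rw [smul_add, ψ.map_add_eq_mul, hv c, hw c, one_mul]
  smul_mem' d v hv c := by
    rw [smul_smul]
    exact hv (c * d)

theorem le_charKernel_iff {R : Type*} [CommMonoid R] {ψ : AddChar V R} {y : Submodule K V} :
    y ≤ charKernel ψ ↔ ∀ v ∈ y, ψ v = 1 :=
  ⟨fun h v hv => by simpa only [one_smul] using h hv 1, fun h v hv c => h _ (y.smul_mem c hv)⟩

variable [Finite K]

/- On the line spanned by `v₀`, `ψ` restricts to a nontrivial character of `K`, and every
character of a finite field is a multiplicative shift of a given nontrivial one. -/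
theorem exists_sub_smul_mem_charKernel {ψ : AddChar V ℂ} {v₀ : V}
    (hv₀ : v₀ ∉ charKernel (K := K) ψ) (v : V) : ∃ d : K, v - d • v₀ ∈ charKernel (K := K) ψ := by
  classical
  have : Fintype K := Fintype.ofFinite K
  let restr (w : V) : AddChar K ℂ :=
    ψ.compAddMonoidHom (LinearMap.toSpanSingleton K V w).toAddMonoidHom
  have restr_apply (w : V) (c : K) : restr w c = ψ (c • w) := rfl
  have hne : restr v₀ ≠ 1 := fun h => hv₀ fun c => by rw [← restr_apply, h, AddChar.one_apply]
  have hbij : Function.Bijective (restr v₀).mulShift :=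
    (Fintype.bijective_iff_injective_and_card _).2
      ⟨AddChar.to_mulShift_inj_of_isPrimitive (AddChar.IsPrimitive.of_ne_one hne),
        AddChar.card_eq.symm⟩
  obtain ⟨d, hd⟩ := hbij.surjective (restr v)
  refine ⟨d, fun c => ?_⟩
  have hc : ψ ((d * c) • v₀) = ψ (c • v) := DFunLike.congr_fun hd c
  rw [smul_sub, smul_smul, mul_comm c d, ψ.map_sub_eq_div, hc, div_self (ψ.val_isUnit _).ne_zero]

theorem isCoatom_charKernel {ψ : AddChar V ℂ} (hψ : ψ ≠ 1) :
    IsCoatom (charKernel (K := K) ψ) := by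
  obtain ⟨v₀, hv₀⟩ := AddChar.ne_one_iff.1 hψ
  have hmem : v₀ ∉ charKernel (K := K) ψ := fun h => hv₀ (by simpa only [one_smul] using h 1)
  have hsup : K ∙ v₀ ⊔ charKernel ψ = ⊤ := by
    refine eq_top_iff.2 fun v _ => ?_
    obtain ⟨d, hd⟩ := exists_sub_smul_mem_charKernel hmem v
    rw [← add_sub_cancel (d • v₀) v]
    exact Submodule.add_mem_sup (Submodule.smul_mem _ d (Submodule.mem_span_singleton_self v₀)) hd
  exact covBy_top_iff.1 (hsup ▸ Submodule.covBy_span_singleton_sup hmem)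

end AdditiveCharacters

section Transvections

variable {F : Type} [Field F] {n : ℕ} {H U x y z : Submodule F (Fin n → F)}

theorem finrank_smap (g : (Fin n → F) ≃ₗ[F] (Fin n → F)) (y : Submodule F (Fin n → F)) :
    finrank F (smap F n g y) = finrank F y :=
  g.finrank_map_eq y

theorem smap_le_smap_iff (g : (Fin n → F) ≃ₗ[F] (Fin n → F)) :
    smap F n g y ≤ smap F n g z ↔ y ≤ z :=
  Submodule.map_le_map_iff_of_injective g.injective y z

theorem smap_mul (g h : Gsub F n H) (y : Submodule F (Fin n → F)) :
    smap F n (g * h : Gsub F n H) y = smap F n g (smap F n h y) :=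
  Submodule.map_comp _ _ y

theorem smap_inv_smap (g : Gsub F n H) (y : Submodule F (Fin n → F)) :
    smap F n (g⁻¹ : Gsub F n H) (smap F n g y) = y := by
  rw [← smap_mul, inv_mul_cancel]
  exact Submodule.map_id y

theorem smap_bijective (g : (Fin n → F) ≃ₗ[F] (Fin n → F)) : Function.Bijective (smap F n g) :=
  (Submodule.orderIsoMapComap g).bijective

theorem inf_smap (g : Gsub F n H) (hx : x ≤ H) : x ⊓ smap F n g y = x ⊓ y := by
  ext v
  refine and_congr_right fun hv => ?_
  have hgv : (g : (Fin n → F) ≃ₗ[F] (Fin n → F)).symm v = v :=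
    (LinearEquiv.symm_apply_eq _).2 (g.2.2 v (hx hv)).symm
  exact (Submodule.mem_map_equiv y).trans (by rw [hgv, SetLike.mem_coe])

theorem smap_of_le (g : Gsub F n H) (hy : y ≤ H) : smap F n g y = y :=
  (Submodule.eq_of_le_of_finrank_eq (inf_eq_left.1 ((inf_smap g hy).trans (inf_idem y)))
    (finrank_smap _ y).symm).symm

/-- The homomorphism sending a vector `h` of the kernel of `f` to the transvection
`v ↦ v + f v • h`; it identifies the group `G` attached to `ker f` with `ker f`. -/
noncomputable def transvectionHom (f : Dual F (Fin n → F)) :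
    Multiplicative (LinearMap.ker f) →* Gsub F n (LinearMap.ker f) where
  toFun h := ⟨LinearEquiv.transvection (LinearMap.mem_ker.1 h.toAdd.2),
    LinearEquiv.transvection.det_eq_one _, fun v hv => by
      rw [LinearEquiv.transvection.apply, LinearMap.mem_ker.1 hv, zero_smul, add_zero]⟩
  map_one' := Subtype.ext (LinearEquiv.transvection.of_right_eq_zero f)
  map_mul' h k := Subtype.ext <| LinearEquiv.ext fun v => by
    rw [Subgroup.coe_mul, LinearEquiv.mul_apply]
    simp only [LinearEquiv.transvection.apply, map_add, map_smul, LinearMap.mem_ker.1 k.toAdd.2,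
      zero_smul, add_zero, toAdd_mul, Submodule.coe_add, smul_add]
    abel

theorem transvectionHom_apply (f : Dual F (Fin n → F)) (h : LinearMap.ker f) (v : Fin n → F) :
    (transvectionHom f (Multiplicative.ofAdd h) : (Fin n → F) ≃ₗ[F] (Fin n → F)) v =
      v + f v • (h : Fin n → F) :=
  LinearEquiv.transvection.apply (LinearMap.mem_ker.1 h.2) v

theorem transvectionHom_surjective {f : Dual F (Fin n → F)} (hf : f ≠ 0) :
    Function.Surjective (transvectionHom f) := by
  obtain ⟨u, hu⟩ := LinearMap.surjective hf 1
  intro g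
  set h := (g : (Fin n → F) ≃ₗ[F] (Fin n → F)) u - u with hh
  have happly (v : Fin n → F) : (g : (Fin n → F) ≃ₗ[F] (Fin n → F)) v = v + f v • h := by
    have hker : v - f v • u ∈ LinearMap.ker f := by
      rw [LinearMap.mem_ker, map_sub, map_smul, hu, smul_eq_mul, mul_one, sub_self]
    have hfix := g.2.2 _ hker
    rw [map_sub, map_smul] at hfix
    rw [hh, smul_sub]
    linear_combination (exp := 1) hfix
  have hmem : h ∈ LinearMap.ker f := by
    have hdet : LinearMap.det (LinearMap.transvection f h) = 1 := by
      have hlin : (g : (Fin n → F) ≃ₗ[F] (Fin n → F)).toLinearMap = LinearMap.transvection f h :=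
        LinearMap.ext happly
      rw [← hlin, ← LinearEquiv.coe_det, g.2.1, Units.val_one]
    rw [LinearMap.transvection.det] at hdet
    exact LinearMap.mem_ker.2 (add_eq_left.1 hdet)
  exact ⟨Multiplicative.ofAdd ⟨h, hmem⟩, Subtype.ext (LinearEquiv.ext fun v => by
    rw [transvectionHom_apply, happly])⟩

theorem transvectionHom_injective {f : Dual F (Fin n → F)} (hf : f ≠ 0) :
    Function.Injective (transvectionHom f) := by
  obtain ⟨u, hu⟩ := LinearMap.surjective hf 1
  intro h k hhk
  have happly := congrArg (fun g : Gsub F n (LinearMap.ker f) => g.1 u) hhk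
  rw [← ofAdd_toAdd h, ← ofAdd_toAdd k] at happly
  simp only [transvectionHom_apply, hu, one_smul, add_right_inj] at happly
  exact Subtype.ext happly

theorem exists_smap_eq_inf_sup (hH : IsCoatom H) (hHU : IsCompl H U) (hz : ¬ z ≤ H) :
    ∃ g : Gsub F n H, smap F n g z = H ⊓ z ⊔ U := by
  suffices ∃ g : Gsub F n H, U ≤ smap F n g z by
    obtain ⟨g, hg⟩ := this
    exact ⟨g, by rw [← inf_smap g le_rfl, inf_sup_eq_of_ge hHU.codisjoint hg]⟩
  obtain ⟨f, -, rfl⟩ := exists_dual_ker_eq_of_isCoatom hH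
  obtain ⟨v, hvz, hv⟩ := SetLike.not_le_iff_exists.1 hz
  obtain ⟨h, hh, t, ht, rfl⟩ := Submodule.mem_sup.1 (hHU.sup_eq_top ▸ Submodule.mem_top : v ∈ _)
  have hft : f t ≠ 0 := fun h0 => hv (Submodule.add_mem _ hh h0)
  let g := transvectionHom f (Multiplicative.ofAdd (-((f t)⁻¹ • ⟨h, hh⟩)))
  have hg : (g : (Fin n → F) ≃ₗ[F] (Fin n → F)) (h + t) = t := by
    rw [transvectionHom_apply, map_add, LinearMap.mem_ker.1 hh, zero_add]
    simp [hft]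
  have hU : IsAtom U := hHU.isCoatom_iff_isAtom.1 hH
  refine ⟨g, hU.not_disjoint_iff_le.1 fun hdisj => hft ?_⟩
  rw [Submodule.disjoint_def.1 hdisj t ht ⟨h + t, hvz, hg⟩, map_zero]

variable [Fintype F]

theorem smap_eq_self_of_memK {g : (Fin n → F) ≃ₗ[F] (Fin n → F)} (hg : memK F n y g) :
    smap F n g y = y := by
  have hle (v : Fin n → F) (hv : v ∈ y) : g v ∈ y := by
    simpa only [sub_add_cancel] using y.add_mem (hg v) hv
  exact Submodule.eq_of_le_of_finrank_eq (Submodule.map_le_iff_le_comap.2 hle) (finrank_smap g y)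

theorem memK_transvectionHom_iff {f : Dual F (Fin n → F)} (hf : f ≠ 0)
    {y : Submodule F (Fin n → F)} (h : LinearMap.ker f) :
    memK F n y (transvectionHom f (Multiplicative.ofAdd h)) ↔ (h : Fin n → F) ∈ y := by
  simp only [memK, transvectionHom_apply, add_sub_cancel_left]
  obtain ⟨u, hu⟩ := LinearMap.surjective hf 1
  exact ⟨fun hy => by simpa only [hu, one_smul] using hy u, fun hy v => y.smul_mem _ hy⟩

theorem memK_self (hH : IsCoatom H) (g : Gsub F n H) : memK F n H g := by
  obtain ⟨f, hf, rfl⟩ := exists_dual_ker_eq_of_isCoatom hH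
  obtain ⟨h, rfl⟩ := transvectionHom_surjective hf g
  exact (memK_transvectionHom_iff hf h.toAdd).2 h.toAdd.2

theorem card_memK (hH : IsCoatom H) (hy : y ≤ H) :
    Nat.card {g : Gsub F n H // memK F n y g} = Nat.card F ^ finrank F y := by
  obtain ⟨f, hf, rfl⟩ := exists_dual_ker_eq_of_isCoatom hH
  rw [← Module.natCard_eq_pow_finrank,
    ← Nat.card_congr (Submodule.comapSubtypeEquivOfLe hy).toEquiv]
  exact (Nat.card_congr ((Equiv.ofBijective (transvectionHom f)
    ⟨transvectionHom_injective hf, transvectionHom_surjective hf⟩).subtypeEquiv fun h =>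
      (memK_transvectionHom_iff hf h.toAdd).symm)).symm

theorem le_smap_sup_iff_memK (hH : IsCoatom H) (hHU : IsCompl H U) (hy : y ≤ H)
    (g : Gsub F n H) : U ≤ smap F n g (y ⊔ U) ↔ memK F n y g := by
  have hyg : y ≤ smap F n g (y ⊔ U) := by
    simpa only [smap_of_le g hy] using (smap_le_smap_iff g.1).2 (le_sup_left : y ≤ y ⊔ U)
  refine ⟨fun hg v => ?_, fun hg => ?_⟩
  · have heq : smap F n g (y ⊔ U) = y ⊔ U :=
      (Submodule.eq_of_le_of_finrank_eq (sup_le hyg hg) (finrank_smap _ _).symm).symm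
    obtain ⟨h, hh, t, ht, rfl⟩ := Submodule.mem_sup.1 (hHU.sup_eq_top ▸ Submodule.mem_top : v ∈ _)
    have htU : t ∈ y ⊔ U := Submodule.mem_sup_right ht
    rw [map_add, g.2.2 h hh, add_sub_add_left_eq_sub, ← inf_sup_eq_of_le hHU.disjoint hy]
    exact ⟨memK_self hH g t, Submodule.sub_mem _ (heq ▸ ⟨t, htU, rfl⟩) htU⟩
  · rw [smap_eq_self_of_memK fun v => Submodule.mem_sup_left (hg v)]
    exact le_sup_right

end Transvections

section TrivialSubspaces

variable {F : Type} [Field F] [Fintype F] {n : ℕ} {H W y z : Submodule F (Fin n → F)}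
  {χ : Gsub F n H →* ℂ}

/-- The subspaces `y` of `H` such that `χ` is trivial on all `g ∈ G` with `(g - id)(Ṽ) ⊆ y`. The
hyperplane `H_χ` of `H` is the largest of them. -/
def trivialSubspaces (χ : Gsub F n H →* ℂ) : Set (Submodule F (Fin n → F)) :=
  {y | y ≤ H ∧ ∀ g : Gsub F n H, memK F n y g → χ g = 1}

theorem mem_trivialSubspaces_of_le (hz : z ∈ trivialSubspaces χ) (hyz : y ≤ z) :
    y ∈ trivialSubspaces χ :=
  ⟨hyz.trans hz.1, fun g hg => hz.2 g fun v => hyz (hg v)⟩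

theorem exists_memK_of_notMem_trivialSubspaces (hyH : y ≤ H) (hy : y ∉ trivialSubspaces χ) :
    ∃ g : Gsub F n H, memK F n y g ∧ χ g ≠ 1 := by
  by_contra! h
  exact hy ⟨hyH, h⟩

theorem isGreatest_trivialSubspaces_iff (hW : W ≤ H) :
    IsGreatest (trivialSubspaces χ) W ↔ ∀ y ≤ H, (y ∈ trivialSubspaces χ ↔ y ≤ W) :=
  ⟨fun h _ _ => ⟨fun hy => h.2 hy, mem_trivialSubspaces_of_le h.1⟩,
    fun h => ⟨(h W hW).2 le_rfl, fun y hy => (h y hy.1).1 hy⟩⟩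

theorem exists_isGreatest_trivialSubspaces (hH : IsCoatom H) (hχ : H ∉ trivialSubspaces χ) :
    ∃ W, IsGreatest (trivialSubspaces χ) W ∧ W ⋖ H := by
  obtain ⟨f, hf, rfl⟩ := exists_dual_ker_eq_of_isCoatom hH
  let ψ : AddChar (LinearMap.ker f) ℂ :=
    AddChar.toMonoidHomEquiv.symm (χ.comp (transvectionHom f))
  let ι := (LinearMap.ker f).subtype
  have hι : Function.Injective ι := Subtype.val_injective
  have hmem (y) (hy : y ≤ LinearMap.ker f) :
      y ∈ trivialSubspaces χ ↔ y ≤ (charKernel ψ).map ι := by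
    rw [← inf_eq_right.2 hy, ← Submodule.map_comap_subtype,
      Submodule.map_le_map_iff_of_injective hι, le_charKernel_iff, Submodule.map_comap_subtype,
      inf_eq_right.2 hy]
    refine ⟨fun h v hv => h.2 _ ((memK_transvectionHom_iff hf v).2 hv), fun h => ⟨hy, ?_⟩⟩
    intro g hg
    obtain ⟨v, rfl⟩ := transvectionHom_surjective hf g
    exact h v.toAdd ((memK_transvectionHom_iff hf v.toAdd).1 hg)
  have hψ : ψ ≠ 1 := fun h => hχ ⟨le_rfl, fun g _ => by
    obtain ⟨v, rfl⟩ := transvectionHom_surjective hf g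
    exact DFunLike.congr_fun h v.toAdd⟩
  refine ⟨_, (isGreatest_trivialSubspaces_iff (Submodule.map_subtype_le _ _)).2 hmem, ?_⟩
  simpa only [ι, Submodule.map_subtype_top] using
    Submodule.map_covBy_of_injective hι (isCoatom_charKernel hψ).covBy_top

end TrivialSubspaces

section HomogeneousComponent

variable {F : Type} [Field F] {n : ℕ} {H U y : Submodule F (Fin n → F)}
  {χ : Gsub F n H →* ℂ} {S S' : Set (Submodule F (Fin n → F))}
  {m m' : Submodule F (Fin n → F) → ℂ}

theorem eq_zero_of_smap_eq_self (hm : m ∈ Mcomp F n H χ S) {g : Gsub F n H}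
    (hg : smap F n g y = y) (hχ : χ g ≠ 1) : m y = 0 := by
  have hgy := hm.2 g y
  rw [show smap F n (g⁻¹ : Gsub F n H) y = y by rw [← hg, smap_inv_smap, hg]] at hgy
  by_contra hmy
  exact hχ ((mul_eq_right₀ hmy).1 hgy.symm)

variable [Fintype F]

theorem eq_zero_of_inf_notMem_trivialSubspaces (hm : m ∈ Mcomp F n H χ S)
    (hy : H ⊓ y ∉ trivialSubspaces χ) : m y = 0 := by
  obtain ⟨g, hg, hχ⟩ := exists_memK_of_notMem_trivialSubspaces inf_le_left hy
  exact eq_zero_of_smap_eq_self hm (smap_eq_self_of_memK fun v => (hg v).2) hχ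

theorem eq_zero_of_le (hm : m ∈ Mcomp F n H χ S) (hχ : H ∉ trivialSubspaces χ) (hy : y ≤ H) :
    m y = 0 := by
  obtain ⟨g, -, hg⟩ := exists_memK_of_notMem_trivialSubspaces le_rfl hχ
  exact eq_zero_of_smap_eq_self hm (smap_of_le g hy) hg

theorem eq_of_apply_sup_eq (hH : IsCoatom H) (hHU : IsCompl H U) (hχ : H ∉ trivialSubspaces χ)
    (hm : m ∈ Mcomp F n H χ S) (hm' : m' ∈ Mcomp F n H χ S')
    (h : ∀ y ∈ trivialSubspaces χ, m (y ⊔ U) = m' (y ⊔ U)) : m = m' := by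
  funext z
  by_cases hzH : z ≤ H
  · rw [eq_zero_of_le hm hχ hzH, eq_zero_of_le hm' hχ hzH]
  by_cases hz : H ⊓ z ∈ trivialSubspaces χ
  · obtain ⟨g, hg⟩ := exists_smap_eq_inf_sup hH hHU hzH
    have hχg : χ g⁻¹ ≠ 0 := ((Group.isUnit g⁻¹).map χ).ne_zero
    have hgz := hm.2 g⁻¹ z
    have hgz' := hm'.2 g⁻¹ z
    rw [inv_inv, hg] at hgz hgz'
    exact mul_left_cancel₀ hχg (by rw [← hgz, ← hgz', h _ hz])
  · rw [eq_zero_of_inf_notMem_trivialSubspaces hm hz, eq_zero_of_inf_notMem_trivialSubspaces hm' hz]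

variable [Fintype (Gsub F n H)]

theorem echi_mem_Mcomp (v : Submodule F (Fin n → F) → ℂ) :
    echi F n H χ v ∈ Mcomp F n H χ Set.univ := by
  refine ⟨fun y hy => absurd (Set.mem_univ y) hy, fun g y => ?_⟩
  simp only [echi, mul_left_comm (χ g), Finset.mul_sum]
  refine Fintype.sum_equiv (Equiv.mulLeft g) _ _ fun h => ?_
  simp only [Equiv.coe_mulLeft, mul_inv_rev, smap_mul, map_mul]
  have hχg : χ g⁻¹ * χ g = 1 := by rw [← map_mul, inv_mul_cancel, map_one]
  rw [mul_assoc (χ h⁻¹), ← mul_assoc (χ g⁻¹), hχg, one_mul]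

theorem echi_congr {v w : Submodule F (Fin n → F) → ℂ}
    (h : ∀ z, H ⊓ z ∈ trivialSubspaces χ → v z = w z) : echi F n H χ v = echi F n H χ w := by
  funext y
  by_cases hy : H ⊓ y ∈ trivialSubspaces χ
  · unfold echi
    congr! 3 with g
    exact h _ (by rwa [inf_smap _ le_rfl])
  · rw [eq_zero_of_inf_notMem_trivialSubspaces (echi_mem_Mcomp v) hy,
      eq_zero_of_inf_notMem_trivialSubspaces (echi_mem_Mcomp w) hy]

variable [Fintype (Submodule F (Fin n → F))]

theorem echi_eq_sum (v : Submodule F (Fin n → F) → ℂ) :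
    echi F n H χ v = ∑ w, v w • echi F n H χ (delta F n w) := by
  classical
  funext y
  have hv (z : Submodule F (Fin n → F)) : v z = ∑ w, v w * delta F n w z := by
    simp only [delta, Finset.sum_mul_boole, Finset.mem_univ, if_true]
  simp only [echi, Finset.sum_apply, Pi.smul_apply, smul_eq_mul, mul_left_comm (v _),
    ← Finset.mul_sum]
  conv_lhs => enter [2, 2, g]; rw [hv]
  simp only [Finset.mul_sum]
  rw [Finset.sum_comm]
  simp only [mul_left_comm (v _)]

end HomogeneousComponent

section ThetaMap

open scoped Matrix

variable {F : Type} [Field F] {n : ℕ} {H U W y : Submodule F (Fin n → F)}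
  {χ : Gsub F n H →* ℂ} {v : Submodule F (Fin n → F) → ℂ}

open Classical in
/-- The linear extension of `y ↦ y ⊔ U`, for `y ≤ H` and `U` a complement of `H`, to vectors
indexed by subspaces: the coefficient of `w` is the one of `H ⊓ w` if `U ≤ w`, and `0` otherwise. -/
noncomputable def supExtend (H U : Submodule F (Fin n → F)) (v : Submodule F (Fin n → F) → ℂ)
    (w : Submodule F (Fin n → F)) : ℂ :=
  if U ≤ w then v (H ⊓ w) else 0

theorem supExtend_sup (hHU : Disjoint H U) (hy : y ≤ H) : supExtend H U v (y ⊔ U) = v y := by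
  rw [supExtend, if_pos le_sup_right, inf_sup_eq_of_le hHU hy]

theorem supExtend_delta (hHU : IsCompl H U) (hy : y ≤ H) :
    supExtend H U (delta F n y) = delta F n (y ⊔ U) := by
  classical
  funext w
  simp only [supExtend, delta, ← ite_and]
  refine if_congr ⟨fun ⟨hU, hw⟩ => ?_, fun hw => ?_⟩ rfl rfl
  · rw [← hw, inf_sup_eq_of_ge hHU.codisjoint hU]
  · exact hw ▸ ⟨le_sup_right, inf_sup_eq_of_le hHU.disjoint hy⟩

variable [Fintype F] [Fintype (Gsub F n H)]

theorem Theta_mulVec [Fintype (Submodule F (Fin n → F))] (hHU : IsCompl H U)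
    (v : Submodule F (Fin n → F) → ℂ) :
    Theta F n H χ U *ᵥ v = echi F n H χ (supExtend H U v) := by
  classical
  have hsupp (w : Submodule F (Fin n → F))
      (hw : supExtend H U v w • echi F n H χ (delta F n w) ≠ 0) : U ≤ w :=
    of_not_not fun hUw => hw (by rw [supExtend, if_neg hUw, zero_smul])
  rw [echi_eq_sum, sum_eq_sum_sup_of_isCompl hHU hsupp, Finset.sum_filter]
  funext z
  simp only [Matrix.mulVec, dotProduct, Finset.sum_apply, Theta]
  refine Finset.sum_congr rfl fun y _ => ?_
  split_ifs with hy
  · rw [supExtend_sup hHU.disjoint hy, Pi.smul_apply, smul_eq_mul, mul_comm]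
  · rw [zero_mul, Pi.zero_apply]

/- The terms of `e_χ` contributing to the coefficient of `y ⊔ U` are those with `(g - id)(Ṽ) ⊆ y`:
there are `q ^ dim y` of them, and `χ` is trivial on each. -/
theorem echi_supExtend_sup (hH : IsCoatom H) (hHU : IsCompl H U) (hy : y ∈ trivialSubspaces χ) :
    echi F n H χ (supExtend H U v) (y ⊔ U) =
      ((Fintype.card F : ℂ) ^ (n - 1))⁻¹ * ((Fintype.card F : ℂ) ^ finrank F y * v y) := by
  classical
  have hterm (g : Gsub F n H) :
      χ g * supExtend H U v (smap F n g (y ⊔ U)) = if memK F n y g then v y else 0 := by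
    rw [supExtend, inf_smap g le_rfl, inf_sup_eq_of_le hHU.disjoint hy.1]
    simp only [le_smap_sup_iff_memK hH hHU hy.1]
    split_ifs with hg
    · rw [hy.2 g hg, one_mul]
    · rw [mul_zero]
  have hcard : (Finset.univ.filter fun g : Gsub F n H => memK F n y g).card =
      Fintype.card F ^ finrank F y := by
    rw [← Fintype.card_subtype, ← Nat.card_eq_fintype_card, ← Nat.card_eq_fintype_card (α := F),
      card_memK hH hy.1]
  have hsum : ∑ g : Gsub F n H, χ g⁻¹ * supExtend H U v (smap F n (g⁻¹ : Gsub F n H) (y ⊔ U)) =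
      ∑ g : Gsub F n H, χ g * supExtend H U v (smap F n g (y ⊔ U)) :=
    Fintype.sum_equiv (Equiv.inv _) _ _ fun _ => rfl
  rw [echi, hsum]
  simp only [hterm, ← Finset.sum_filter, Finset.sum_const, hcard, nsmul_eq_mul, Nat.cast_pow]

theorem echi_supExtend_sup_of_support (hH : IsCoatom H) (hHU : IsCompl H U)
    (hv : ∀ y ∉ trivialSubspaces χ, v y = 0) (hy : y ≤ H) :
    echi F n H χ (supExtend H U v) (y ⊔ U) =
      ((Fintype.card F : ℂ) ^ (n - 1))⁻¹ * ((Fintype.card F : ℂ) ^ finrank F y * v y) := by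
  by_cases hyχ : y ∈ trivialSubspaces χ
  · exact echi_supExtend_sup hH hHU hyχ
  · have hinf : H ⊓ (y ⊔ U) ∉ trivialSubspaces χ := by rwa [inf_sup_eq_of_le hHU.disjoint hy]
    rw [eq_zero_of_inf_notMem_trivialSubspaces (echi_mem_Mcomp _) hinf, hv y hyχ, mul_zero,
      mul_zero]

theorem echi_delta_sup_ne_zero_iff (hH : IsCoatom H) (hHU : IsCompl H U) (hy : y ≤ H) :
    echi F n H χ (delta F n (y ⊔ U)) ≠ 0 ↔ y ∈ trivialSubspaces χ := by
  have hq : (Fintype.card F : ℂ) ≠ 0 := Nat.cast_ne_zero.2 Fintype.card_ne_zero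
  constructor
  · contrapose!
    intro hyχ
    have hzero : echi F n H χ (delta F n (y ⊔ U)) = echi F n H χ 0 := echi_congr fun z hz =>
      if_neg fun hzy => hyχ (by rwa [hzy, inf_sup_eq_of_le hHU.disjoint hy] at hz)
    rw [hzero]
    funext z
    simp only [echi, Pi.zero_apply, mul_zero, Finset.sum_const_zero]
  · intro hyχ h0
    have hval := echi_supExtend_sup (v := delta F n y) hH hHU hyχ
    rw [supExtend_delta hHU hy, h0, delta, if_pos rfl, mul_one] at hval
    exact mul_ne_zero (inv_ne_zero (pow_ne_zero _ hq)) (pow_ne_zero _ hq) hval.symm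

theorem isGreatest_trivialSubspaces_iff_echi (hH : IsCoatom H) (hHU : IsCompl H U) (hW : W ≤ H) :
    IsGreatest (trivialSubspaces χ) W ↔
      ∀ y ≤ H, (echi F n H χ (delta F n (y ⊔ U)) ≠ 0 ↔ y ≤ W) := by
  rw [isGreatest_trivialSubspaces_iff hW]
  exact forall₂_congr fun y hy => iff_congr (echi_delta_sup_ne_zero_iff hH hHU hy).symm Iff.rfl

variable [Fintype (Submodule F (Fin n → F))]

theorem bijOn_Theta_mulVec (hH : IsCoatom H) (hHU : IsCompl H U) (hχ : H ∉ trivialSubspaces χ)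
    (hW : IsGreatest (trivialSubspaces χ) W) :
    Set.BijOn (Theta F n H χ U *ᵥ ·) {v | ∀ y, ¬ y ≤ W → v y = 0}
      (Mcomp F n H χ {y | ¬ y ≤ H}) := by
  classical
  have hq (k : ℕ) : (Fintype.card F : ℂ) ^ k ≠ 0 :=
    pow_ne_zero k (Nat.cast_ne_zero.2 Fintype.card_ne_zero)
  refine ⟨fun v _ => ?_, fun v hv w hw hvw => ?_, fun m hm => ?_⟩
  · have hmem : Theta F n H χ U *ᵥ v ∈ Mcomp F n H χ Set.univ :=
      Theta_mulVec hHU v ▸ echi_mem_Mcomp _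
    exact ⟨fun y hy => eq_zero_of_le hmem hχ (not_not.1 hy), hmem.2⟩
  · funext y
    by_cases hy : y ≤ W
    · have hyχ := mem_trivialSubspaces_of_le hW.1 hy
      have hyU := congrFun hvw (y ⊔ U)
      simp only [Theta_mulVec hHU, echi_supExtend_sup hH hHU hyχ] at hyU
      exact mul_left_cancel₀ (hq _) (mul_left_cancel₀ (inv_ne_zero (hq _)) hyU)
    · rw [hv y hy, hw y hy]
  · let v (y : Submodule F (Fin n → F)) : ℂ :=
      if y ≤ W then ((Fintype.card F : ℂ) ^ finrank F y)⁻¹ *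
        ((Fintype.card F : ℂ) ^ (n - 1) * m (y ⊔ U)) else 0
    refine ⟨v, fun y hy => if_neg hy, ?_⟩
    simp only [Theta_mulVec hHU]
    refine eq_of_apply_sup_eq hH hHU hχ (echi_mem_Mcomp _) hm fun y hy => ?_
    rw [echi_supExtend_sup hH hHU hy, show v y = _ from if_pos (hW.2 hy),
      mul_inv_cancel_left₀ (hq _), inv_mul_cancel_left₀ (hq _)]

end ThetaMap

section Intertwiners

open scoped Matrix

variable {F : Type} [Field F] {n : ℕ} {H U : Submodule F (Fin n → F)}
  {χ : Gsub F n H →* ℂ} {S : Set (Submodule F (Fin n → F))}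
  {A B : Matrix (Submodule F (Fin n → F)) (Submodule F (Fin n → F)) ℂ}
  {m v : Submodule F (Fin n → F) → ℂ}

/-- A matrix indexed by the subspaces of `Ṽ` is `G`-invariant if it commutes with the action of `G`
on them. -/
def IsGInvariant (H : Submodule F (Fin n → F))
    (A : Matrix (Submodule F (Fin n → F)) (Submodule F (Fin n → F)) ℂ) : Prop :=
  ∀ (g : Gsub F n H) (y z : Submodule F (Fin n → F)),
    A (smap F n g y) (smap F n g z) = A y z

variable [Fintype (Submodule F (Fin n → F))]

theorem mulVec_smap (hA : IsGInvariant H A) (v : Submodule F (Fin n → F) → ℂ) (g : Gsub F n H)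
    (y : Submodule F (Fin n → F)) :
    (A *ᵥ v) (smap F n g y) = (A *ᵥ fun z => v (smap F n g z)) y := by
  simp only [Matrix.mulVec, dotProduct]
  rw [← (smap_bijective g.1).sum_comp]
  simp only [hA g]

theorem mulVec_mem_Mcomp (hA : IsGInvariant H A) (hm : m ∈ Mcomp F n H χ S) :
    A *ᵥ m ∈ Mcomp F n H χ Set.univ := by
  refine ⟨fun y hy => absurd (Set.mem_univ y) hy, fun g y => ?_⟩
  rw [mulVec_smap hA]
  simp only [hm.2 g]
  exact congrFun (Matrix.mulVec_smul A (χ g) m) y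

variable [Fintype F] [Fintype (Gsub F n H)]

theorem mulVec_echi (hA : IsGInvariant H A) (v : Submodule F (Fin n → F) → ℂ) :
    A *ᵥ echi F n H χ v = echi F n H χ (A *ᵥ v) := by
  funext y
  simp only [echi, mulVec_smap hA]
  simp only [Matrix.mulVec, dotProduct, echi, Finset.mul_sum]
  rw [Finset.sum_comm]
  exact Finset.sum_congr rfl fun g _ => Finset.sum_congr rfl fun z _ => by ring

/- The weight `q ^ dim y` of the diagonal action of `Θ_χ` grows by the factor `q` from `y` to a
subspace of one dimension more. -/
theorem lowering_mulVec_Theta (hH : IsCoatom H) (hHU : IsCompl H U)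
    (hχ : H ∉ trivialSubspaces χ) (hA : IsGInvariant H A) (hle : ∀ w z, A w z ≠ 0 → w ≤ z)
    (hAB : ∀ y ∈ trivialSubspaces χ, ∀ z ∈ trivialSubspaces χ, A (y ⊔ U) (z ⊔ U) = B y z)
    (hB : ∀ y z, B y z ≠ 0 → finrank F y + 1 = finrank F z)
    (hv : ∀ y ∉ trivialSubspaces χ, v y = 0) :
    A *ᵥ (Theta F n H χ U *ᵥ v) = (Fintype.card F : ℂ) • Theta F n H χ U *ᵥ (B *ᵥ v) := by
  classical
  rw [Theta_mulVec hHU, Theta_mulVec hHU]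
  refine eq_of_apply_sup_eq hH hHU hχ (mulVec_mem_Mcomp hA (echi_mem_Mcomp _))
    (Submodule.smul_mem _ _ (echi_mem_Mcomp _)) fun y hy => ?_
  set c : ℂ := ((Fintype.card F : ℂ) ^ (n - 1))⁻¹
  set q : ℂ := (Fintype.card F : ℂ)
  have hterm (z : Submodule F (Fin n → F)) (hz : z ≤ H) :
      A (y ⊔ U) (z ⊔ U) * echi F n H χ (supExtend H U v) (z ⊔ U) =
        q * (c * (q ^ finrank F y * (B y z * v z))) := by
    rw [echi_supExtend_sup_of_support hH hHU hv hz]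
    by_cases hzχ : z ∈ trivialSubspaces χ
    · rw [hAB y hy z hzχ]
      by_cases hByz : B y z = 0
      · simp only [hByz, zero_mul, mul_zero]
      · rw [← hB y z hByz]
        ring
    · simp only [hv z hzχ, mul_zero]
  calc (A *ᵥ echi F n H χ (supExtend H U v)) (y ⊔ U)
      = ∑ z with z ≤ H, A (y ⊔ U) (z ⊔ U) * echi F n H χ (supExtend H U v) (z ⊔ U) :=
        sum_eq_sum_sup_of_isCompl hHU fun w hw =>
          le_sup_right.trans (hle _ _ (left_ne_zero_of_mul hw))
    _ = ∑ z with z ≤ H, q * (c * (q ^ finrank F y * (B y z * v z))) :=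
        Finset.sum_congr rfl fun z hz => hterm z (Finset.mem_filter.1 hz).2
    _ = ∑ z, q * (c * (q ^ finrank F y * (B y z * v z))) :=
        Finset.sum_filter_of_ne fun z _ hz => of_not_not fun hzH =>
          hz (by simp only [hv z fun hzχ => hzH hzχ.1, mul_zero])
    _ = q * echi F n H χ (supExtend H U (B *ᵥ v)) (y ⊔ U) := by
        rw [echi_supExtend_sup hH hHU hy]
        simp only [Matrix.mulVec, dotProduct, Finset.mul_sum, q, c]

theorem raising_mulVec_Theta (hHU : IsCompl H U) (hA : IsGInvariant H A)
    (hle : ∀ w z, A w z ≠ 0 → z ≤ w)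
    (hAB : ∀ y ∈ trivialSubspaces χ, ∀ z ∈ trivialSubspaces χ, A (y ⊔ U) (z ⊔ U) = B y z)
    (hv : ∀ y ∉ trivialSubspaces χ, v y = 0) :
    A *ᵥ (Theta F n H χ U *ᵥ v) = Theta F n H χ U *ᵥ (B *ᵥ v) := by
  classical
  rw [Theta_mulVec hHU, Theta_mulVec hHU, mulVec_echi hA]
  refine echi_congr fun w hw => ?_
  have hsupp (z : Submodule F (Fin n → F)) (hz : A w z * supExtend H U v z ≠ 0) : U ≤ z :=
    of_not_not fun hUz => right_ne_zero_of_mul hz (if_neg hUz)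
  simp only [Matrix.mulVec, dotProduct]
  rw [sum_eq_sum_sup_of_isCompl hHU hsupp, supExtend]
  split_ifs with hUw
  · have hterm (z : Submodule F (Fin n → F)) (hz : z ≤ H) :
        A w (z ⊔ U) * supExtend H U v (z ⊔ U) = B (H ⊓ w) z * v z := by
      rw [supExtend_sup hHU.disjoint hz]
      by_cases hzχ : z ∈ trivialSubspaces χ
      · rw [← hAB _ hw z hzχ, inf_sup_eq_of_ge hHU.codisjoint hUw]
      · rw [hv z hzχ, mul_zero, mul_zero]
    exact (Finset.sum_congr rfl fun z hz => hterm z (Finset.mem_filter.1 hz).2).trans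
      (Finset.sum_filter_of_ne fun z _ hz => of_not_not fun hzH =>
        right_ne_zero_of_mul hz (hv z fun hzχ => hzH hzχ.1))
  · exact Finset.sum_eq_zero fun z _ => of_not_not fun hz =>
      hUw (le_sup_right.trans (hle w _ (left_ne_zero_of_mul hz)))

end Intertwiners

section LoweringRaising

open scoped Matrix

variable {F : Type} [Field F] {n : ℕ} {x H U W y z : Submodule F (Fin n → F)}
  {χ : Gsub F n H →* ℂ} {S : Set (Submodule F (Fin n → F))} {i j k : ℤ}
  {m v : Submodule F (Fin n → F) → ℂ}

theorem le_of_ptMem_zero (hy : PtMem F n x H i j 0 y) : y ≤ H :=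
  finrank_inf_eq_iff_le.1 (by have := hy.2; omega)

section Invariance

theorem finrank_inf_smap (g : Gsub F n H) (hx : x ≤ H) :
    finrank F ↥(x ⊓ smap F n g y) = finrank F ↥(x ⊓ y) := by
  rw [inf_smap g hx]

variable (hxH : x ≤ H)

include hxH

theorem isGInvariant_LoneT : IsGInvariant H (LoneT F n x H) := fun g y z => by
  classical
  exact if_congr (by simp only [smap_le_smap_iff, finrank_smap, finrank_inf_smap g hxH,
    finrank_inf_smap g le_rfl]) rfl rfl

theorem isGInvariant_LtwoT : IsGInvariant H (LtwoT F n x H) := fun g y z => by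
  classical
  exact if_congr (by simp only [smap_le_smap_iff, finrank_smap, finrank_inf_smap g hxH,
    finrank_inf_smap g le_rfl]) rfl rfl

theorem isGInvariant_LthreeT : IsGInvariant H (LthreeT F n x H) := fun g y z => by
  classical
  exact if_congr (by simp only [smap_le_smap_iff, finrank_smap, finrank_inf_smap g hxH,
    finrank_inf_smap g le_rfl]) rfl rfl

theorem isGInvariant_RoneT : IsGInvariant H (RoneT F n x H) := fun g y z => by
  classical
  exact if_congr (by simp only [smap_le_smap_iff, finrank_smap, finrank_inf_smap g hxH,
    finrank_inf_smap g le_rfl]) rfl rfl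

theorem isGInvariant_RtwoT : IsGInvariant H (RtwoT F n x H) := fun g y z => by
  classical
  exact if_congr (by simp only [smap_le_smap_iff, finrank_smap, finrank_inf_smap g hxH,
    finrank_inf_smap g le_rfl]) rfl rfl

theorem ptMem_smap_iff (g : Gsub F n H) :
    PtMem F n x H i j k (smap F n g y) ↔ PtMem F n x H i j k y := by
  simp only [PtMem, finrank_smap, finrank_inf_smap g hxH, finrank_inf_smap g le_rfl]

theorem isGInvariant_EstarT : IsGInvariant H (EstarT F n x H i j k) := fun g y z => by
  classical
  simp only [EstarT, Matrix.diagonal_apply, (smap_bijective g.1).injective.eq_iff]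
  exact if_congr Iff.rfl (if_congr (ptMem_smap_iff hxH g) rfl rfl) rfl

end Invariance

section Entries

theorem finrank_inf_sup_of_disjoint (hHU : Disjoint H U) (hWH : W ≤ H) (hy : y ≤ W)
    (hxH : x ≤ H) : finrank F ↥(x ⊓ (y ⊔ U)) = finrank F ↥(x ⊓ W ⊓ y) := by
  rw [inf_sup_eq_inf_of_le hHU hxH (hy.trans hWH), inf_assoc, inf_eq_right.2 hy]

theorem finrank_hyperplane_inf_sup (hHU : Disjoint H U) (hy : y ≤ H) :
    finrank F ↥(H ⊓ (y ⊔ U)) = finrank F y := by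
  rw [inf_sup_eq_of_le hHU hy]

variable (hH : IsCoatom H) (hHU : IsCompl H U) (hWH : W ≤ H) (hxH : x ≤ H) (hy : y ≤ W)

include hH hHU hWH hxH hy

theorem ptMem_sup_iff :
    PtMem F n x H i j 1 (y ⊔ U) ↔
      y ≤ W ∧ (finrank F ↥(x ⊓ W ⊓ y) : ℤ) = i ∧ (finrank F y : ℤ) = i + j := by
  have hyH := hy.trans hWH
  rw [PtMem, finrank_inf_sup_of_disjoint hHU.disjoint hWH hy hxH,
    finrank_hyperplane_inf_sup hHU.disjoint hyH, finrank_sup_of_isCompl hH hHU hyH]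
  simp only [hy, Nat.cast_add, Nat.cast_one, add_left_inj, and_self, true_and]

variable (hz : z ≤ W)

include hz

theorem sup_le_sup_and_finrank_iff (P : ℕ → ℕ → Prop) :
    (y ⊔ U ≤ z ⊔ U ∧ finrank F ↥(y ⊔ U) + 1 = finrank F ↥(z ⊔ U) ∧
      P (finrank F ↥(x ⊓ (y ⊔ U))) (finrank F ↥(x ⊓ (z ⊔ U))) ∧
      finrank F ↥(H ⊓ (y ⊔ U)) + 1 = finrank F ↥(H ⊓ (z ⊔ U))) ↔
    y ≤ z ∧ finrank F y + 1 = finrank F z ∧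
      P (finrank F ↥(x ⊓ W ⊓ y)) (finrank F ↥(x ⊓ W ⊓ z)) := by
  have hyH := hy.trans hWH
  have hzH := hz.trans hWH
  simp only [sup_le_sup_iff_of_disjoint hHU.disjoint hyH hzH,
    finrank_sup_of_isCompl hH hHU hyH, finrank_sup_of_isCompl hH hHU hzH,
    finrank_inf_sup_of_disjoint hHU.disjoint hWH hy hxH,
    finrank_inf_sup_of_disjoint hHU.disjoint hWH hz hxH,
    finrank_hyperplane_inf_sup hHU.disjoint hyH, finrank_hyperplane_inf_sup hHU.disjoint hzH,
    Nat.add_right_cancel_iff]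
  tauto

theorem LoneT_sup_sup : LoneT F n x H (y ⊔ U) (z ⊔ U) = LoneRel F n (x ⊓ W) W y z := by
  classical
  exact if_congr ((sup_le_sup_and_finrank_iff hH hHU hWH hxH hy hz (· + 1 = ·)).trans
    (and_iff_right hz).symm) rfl rfl

theorem LtwoT_sup_sup : LtwoT F n x H (y ⊔ U) (z ⊔ U) = LtwoRel F n (x ⊓ W) W y z := by
  classical
  exact if_congr ((sup_le_sup_and_finrank_iff hH hHU hWH hxH hy hz (· = ·)).trans
    (and_iff_right hz).symm) rfl rfl

theorem RoneT_sup_sup : RoneT F n x H (y ⊔ U) (z ⊔ U) = RoneRel F n (x ⊓ W) W y z := by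
  classical
  exact if_congr ((sup_le_sup_and_finrank_iff hH hHU hWH hxH hz hy (· + 1 = ·)).trans
    (and_iff_right hy).symm) rfl rfl

theorem RtwoT_sup_sup : RtwoT F n x H (y ⊔ U) (z ⊔ U) = RtwoRel F n (x ⊓ W) W y z := by
  classical
  exact if_congr ((sup_le_sup_and_finrank_iff hH hHU hWH hxH hz hy (· = ·)).trans
    (and_iff_right hy).symm) rfl rfl

theorem EstarT_one_sup_sup :
    EstarT F n x H i j 1 (y ⊔ U) (z ⊔ U) = EstarRel F n (x ⊓ W) W i j y z := by
  classical
  have heq : y ⊔ U = z ⊔ U ↔ y = z := by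
    simp only [le_antisymm_iff,
      sup_le_sup_iff_of_disjoint hHU.disjoint (hy.trans hWH) (hz.trans hWH),
      sup_le_sup_iff_of_disjoint hHU.disjoint (hz.trans hWH) (hy.trans hWH)]
  rw [EstarT, EstarRel, Matrix.diagonal_apply, Matrix.diagonal_apply]
  exact if_congr heq (if_congr (ptMem_sup_iff hH hHU hWH hxH hy) rfl rfl) rfl

end Entries

variable [Fintype (Submodule F (Fin n → F))]

theorem EstarT_mulVec_eq_zero (hm : ∀ y, PtMem F n x H i j k y → m y = 0) :
    EstarT F n x H i j k *ᵥ m = 0 := by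
  classical
  funext y
  rw [EstarT, Matrix.mulVec_diagonal, ite_mul, zero_mul, one_mul]
  exact ite_eq_right_iff.2 (hm y)

variable [Fintype F]

theorem LthreeT_mulVec_eq_zero (hH : IsCoatom H) (hxH : x ≤ H) (hχ : H ∉ trivialSubspaces χ)
    (hm : m ∈ Mcomp F n H χ S) : LthreeT F n x H *ᵥ m = 0 := by
  classical
  funext y
  by_cases hyH : y ≤ H
  · exact eq_zero_of_le (mulVec_mem_Mcomp (isGInvariant_LthreeT hxH) hm) hχ hyH
  · refine Finset.sum_eq_zero fun z _ => mul_eq_zero_of_left (if_neg ?_) _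
    rintro ⟨-, hdim, -, hdimH⟩
    have hy := finrank_eq_finrank_inf_add_one hH hyH
    have hz := finrank_le_finrank_inf_add_one hH z
    omega

theorem RthreeT_mulVec_eq_zero (hH : IsCoatom H) (hχ : H ∉ trivialSubspaces χ)
    (hm : m ∈ Mcomp F n H χ S) : RthreeT F n x H *ᵥ m = 0 := by
  classical
  funext y
  refine Finset.sum_eq_zero fun z _ => ?_
  by_cases hzH : z ≤ H
  · rw [eq_zero_of_le hm hχ hzH, mul_zero]
  · refine mul_eq_zero_of_left (if_neg ?_) _
    rintro ⟨-, hdim, -, hdimH⟩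
    have hy := finrank_le_finrank_inf_add_one hH y
    have hz := finrank_eq_finrank_inf_add_one hH hzH
    omega

theorem EstarT_zero_mulVec_eq_zero (hχ : H ∉ trivialSubspaces χ) (hm : m ∈ Mcomp F n H χ S) :
    EstarT F n x H i j 0 *ᵥ m = 0 :=
  EstarT_mulVec_eq_zero fun _ hy => eq_zero_of_le hm hχ (le_of_ptMem_zero hy)

theorem EstarT_mulVec_eq_zero_of_finrank_eq (hx : (finrank F x : ℤ) = i) (hxH : x ≤ H)
    (hχ : x ∉ trivialSubspaces χ) (hm : m ∈ Mcomp F n H χ S) : EstarT F n x H i j k *ᵥ m = 0 := by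
  refine EstarT_mulVec_eq_zero fun y hy => eq_zero_of_inf_notMem_trivialSubspaces hm fun hHy => ?_
  have hxy : x ≤ y := inf_eq_left.1
    (Submodule.eq_of_le_of_finrank_eq inf_le_left (Nat.cast_injective (hy.1.trans hx.symm)))
  exact hχ (mem_trivialSubspaces_of_le hHy (le_inf hxH hxy))

section Theta

variable [Fintype (Gsub F n H)] (hH : IsCoatom H) (hHU : IsCompl H U) (hxH : x ≤ H)
  (hW : IsGreatest (trivialSubspaces χ) W) (hv : ∀ y ∉ trivialSubspaces χ, v y = 0)

include hH hHU hxH hW hv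

theorem LoneT_mulVec_Theta (hχ : H ∉ trivialSubspaces χ) :
    LoneT F n x H *ᵥ (Theta F n H χ U *ᵥ v) =
      (Fintype.card F : ℂ) • Theta F n H χ U *ᵥ (LoneRel F n (x ⊓ W) W *ᵥ v) := by
  classical
  exact lowering_mulVec_Theta hH hHU hχ (isGInvariant_LoneT hxH)
    (fun _ _ h => (ite_ne_right_iff.1 h).1.1)
    (fun _ hy _ hz => LoneT_sup_sup hH hHU hW.1.1 hxH (hW.2 hy) (hW.2 hz))
    (fun _ _ h => (ite_ne_right_iff.1 h).1.2.2.1) hv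

theorem LtwoT_mulVec_Theta (hχ : H ∉ trivialSubspaces χ) :
    LtwoT F n x H *ᵥ (Theta F n H χ U *ᵥ v) =
      (Fintype.card F : ℂ) • Theta F n H χ U *ᵥ (LtwoRel F n (x ⊓ W) W *ᵥ v) := by
  classical
  exact lowering_mulVec_Theta hH hHU hχ (isGInvariant_LtwoT hxH)
    (fun _ _ h => (ite_ne_right_iff.1 h).1.1)
    (fun _ hy _ hz => LtwoT_sup_sup hH hHU hW.1.1 hxH (hW.2 hy) (hW.2 hz))
    (fun _ _ h => (ite_ne_right_iff.1 h).1.2.2.1) hv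

theorem RoneT_mulVec_Theta :
    RoneT F n x H *ᵥ (Theta F n H χ U *ᵥ v) =
      Theta F n H χ U *ᵥ (RoneRel F n (x ⊓ W) W *ᵥ v) := by
  classical
  exact raising_mulVec_Theta hHU (isGInvariant_RoneT hxH) (fun _ _ h => (ite_ne_right_iff.1 h).1.1)
    (fun _ hy _ hz => RoneT_sup_sup hH hHU hW.1.1 hxH (hW.2 hy) (hW.2 hz)) hv

theorem RtwoT_mulVec_Theta :
    RtwoT F n x H *ᵥ (Theta F n H χ U *ᵥ v) =
      Theta F n H χ U *ᵥ (RtwoRel F n (x ⊓ W) W *ᵥ v) := by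
  classical
  exact raising_mulVec_Theta hHU (isGInvariant_RtwoT hxH) (fun _ _ h => (ite_ne_right_iff.1 h).1.1)
    (fun _ hy _ hz => RtwoT_sup_sup hH hHU hW.1.1 hxH (hW.2 hy) (hW.2 hz)) hv

theorem EstarT_one_mulVec_Theta :
    EstarT F n x H i j 1 *ᵥ (Theta F n H χ U *ᵥ v) =
      Theta F n H χ U *ᵥ (EstarRel F n (x ⊓ W) W i j *ᵥ v) :=
  raising_mulVec_Theta hHU (isGInvariant_EstarT hxH)
    (fun w z h => (of_not_not fun hwz => h (Matrix.diagonal_apply_ne' _ hwz) : z = w).le)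
    (fun _ hy _ hz => EstarT_one_sup_sup hH hHU hW.1.1 hxH (hW.2 hy) (hW.2 hz)) hv

end Theta

end LoweringRaising

section Hyperplane

variable {F : Type} [Field F] {n : ℕ} {x H W : Submodule F (Fin n → F)} {i j : ℤ}

theorem ptMem_zero_of_covBy (hxH : x ≤ H) (hWH : W ⋖ H) (hxW : ¬ x ≤ W)
    (hx : (finrank F x : ℤ) = i + 1) (hH : (finrank F H : ℤ) = i + j + 1) :
    PtMem F n x H i j 0 W := by
  have hsup : W ⊔ x = H :=
    (hWH.eq_or_eq le_sup_left (sup_le hWH.le hxH)).resolve_left fun h => hxW (h ▸ le_sup_right)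
  have hxdim := finrank_eq_add_one_of_covBy (inf_covBy_of_covBy_sup_left (hsup.symm ▸ hWH))
  have hHdim := finrank_eq_add_one_of_covBy hWH
  rw [inf_comm] at hxdim
  rw [PtMem, inf_eq_right.2 hWH.le]
  omega

end Hyperplane

open Classical in
/-- for a character `χ` with `χ|_K ≠ 1_K` there is a unique
`H_χ ∈ P̃_{a-1,b,0}` supporting `Θ_χ`; moreover `Θ_χ` maps
`ℂP(x ∩ H_χ, H_χ)` bijectively onto `M(χ)` and the stated commutation
identities hold on `ℂP(x ∩ H_χ, H_χ)`. -/
theorem Theta_iso_K_nontrivial (F : Type) [Field F] [Fintype F] (a b : ℕ)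
    (x H : Submodule F (Fin (a + b + 1) → F))
    (hx : finrank F x = a) (hH : finrank F H = a + b) (hxH : x ≤ H)
    [Fintype (Gsub F (a + b + 1) H)]
    (u : Submodule F (Fin (a + b + 1) → F))
    (hu : finrank F ↥(x ⊓ u) = 0 ∧ finrank F ↥(H ⊓ u) = 0 ∧ finrank F u = 1)
    (χ : Gsub F (a + b + 1) H →* ℂ)
    (hχK : ¬ ∀ g : Gsub F (a + b + 1) H, memK F (a + b + 1) x g → χ g = 1) :
    (∃! Hχ : Submodule F (Fin (a + b + 1) → F),
      PtMem F (a + b + 1) x H ((a : ℤ) - 1) (b : ℤ) 0 Hχ ∧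
      ∀ y : Submodule F (Fin (a + b + 1) → F), y ≤ H →
        (echi F (a + b + 1) H χ (delta F (a + b + 1) (y ⊔ u)) ≠ 0 ↔ y ≤ Hχ))
    ∧ ∀ Hχ : Submodule F (Fin (a + b + 1) → F),
        PtMem F (a + b + 1) x H ((a : ℤ) - 1) (b : ℤ) 0 Hχ →
        (∀ y : Submodule F (Fin (a + b + 1) → F), y ≤ H →
          (echi F (a + b + 1) H χ (delta F (a + b + 1) (y ⊔ u)) ≠ 0 ↔ y ≤ Hχ)) →
        ((∀ v w : Submodule F (Fin (a + b + 1) → F) → ℂ,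
            (∀ y, ¬y ≤ Hχ → v y = 0) → (∀ y, ¬y ≤ Hχ → w y = 0) →
            (Theta F (a + b + 1) H χ u).mulVec v = (Theta F (a + b + 1) H χ u).mulVec w →
            v = w)
        ∧ (∀ v : Submodule F (Fin (a + b + 1) → F) → ℂ, (∀ y, ¬y ≤ Hχ → v y = 0) →
            (Theta F (a + b + 1) H χ u).mulVec v ∈ Mcomp F (a + b + 1) H χ {y | ¬y ≤ H})
        ∧ (∀ m ∈ Mcomp F (a + b + 1) H χ {y | ¬y ≤ H},
            ∃ v : Submodule F (Fin (a + b + 1) → F) → ℂ,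
              (∀ y, ¬y ≤ Hχ → v y = 0) ∧ (Theta F (a + b + 1) H χ u).mulVec v = m)
        ∧ ∀ v : Submodule F (Fin (a + b + 1) → F) → ℂ, (∀ y, ¬y ≤ Hχ → v y = 0) →
            ((LoneT F (a + b + 1) x H).mulVec ((Theta F (a + b + 1) H χ u).mulVec v)
                = (Fintype.card F : ℂ) •
                    (Theta F (a + b + 1) H χ u).mulVec
                      ((LoneRel F (a + b + 1) (x ⊓ Hχ) Hχ).mulVec v))
            ∧ ((LtwoT F (a + b + 1) x H).mulVec ((Theta F (a + b + 1) H χ u).mulVec v)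
                = (Fintype.card F : ℂ) •
                    (Theta F (a + b + 1) H χ u).mulVec
                      ((LtwoRel F (a + b + 1) (x ⊓ Hχ) Hχ).mulVec v))
            ∧ ((LthreeT F (a + b + 1) x H).mulVec ((Theta F (a + b + 1) H χ u).mulVec v) = 0)
            ∧ ((RoneT F (a + b + 1) x H).mulVec ((Theta F (a + b + 1) H χ u).mulVec v)
                = (Theta F (a + b + 1) H χ u).mulVec
                    ((RoneRel F (a + b + 1) (x ⊓ Hχ) Hχ).mulVec v))
            ∧ ((RtwoT F (a + b + 1) x H).mulVec ((Theta F (a + b + 1) H χ u).mulVec v)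
                = (Theta F (a + b + 1) H χ u).mulVec
                    ((RtwoRel F (a + b + 1) (x ⊓ Hχ) Hχ).mulVec v))
            ∧ ((RthreeT F (a + b + 1) x H).mulVec ((Theta F (a + b + 1) H χ u).mulVec v) = 0)
            ∧ (∀ i j : ℕ, i < a → j ≤ b →
                (EstarT F (a + b + 1) x H i j 0).mulVec
                    ((Theta F (a + b + 1) H χ u).mulVec v) = 0)
            ∧ (∀ j : ℕ, j ≤ b →
                (EstarT F (a + b + 1) x H a j 0).mulVec
                    ((Theta F (a + b + 1) H χ u).mulVec v) = 0)
            ∧ (∀ j : ℕ, j ≤ b →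
                (EstarT F (a + b + 1) x H a j 1).mulVec
                    ((Theta F (a + b + 1) H χ u).mulVec v) = 0)
            ∧ (∀ i j : ℕ, i < a → j ≤ b →
                (EstarT F (a + b + 1) x H i j 1).mulVec
                    ((Theta F (a + b + 1) H χ u).mulVec v)
                  = (Theta F (a + b + 1) H χ u).mulVec
                      ((EstarRel F (a + b + 1) (x ⊓ Hχ) Hχ i j).mulVec v))) := by
  obtain ⟨hHc, hHu⟩ := isCoatom_and_isCompl_of_finrank (by rw [finrank_fin_fun, hH]) hu.2.1 hu.2.2
  have hχx : x ∉ trivialSubspaces χ := fun h => hχK h.2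
  have hχH : H ∉ trivialSubspaces χ := fun h => hχx (mem_trivialSubspaces_of_le h hxH)
  have hiff {W} (hW : PtMem F (a + b + 1) x H (a - 1) b 0 W) :=
    isGreatest_trivialSubspaces_iff_echi (χ := χ) hHc hHu (le_of_ptMem_zero hW)
  obtain ⟨W₀, hW₀, hcov⟩ := exists_isGreatest_trivialSubspaces hHc hχH
  have hPt : PtMem F (a + b + 1) x H (a - 1) b 0 W₀ := ptMem_zero_of_covBy hxH hcov
    (fun h => hχx (mem_trivialSubspaces_of_le hW₀.1 h)) (by omega) (by omega)
  refine ⟨⟨W₀, ⟨hPt, (hiff hPt).1 hW₀⟩, fun W hW => ((hiff hW.1).2 hW.2).unique hW₀⟩,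
    fun W hWPt hWechi => ?_⟩
  have hW : IsGreatest (trivialSubspaces χ) W := (hiff hWPt).2 hWechi
  obtain ⟨hmaps, hinj, hsurj⟩ := bijOn_Theta_mulVec hHc hHu hχH hW
  refine ⟨fun v w hv hw => hinj hv hw, fun v => hmaps (x := v), hsurj, fun v hvW => ?_⟩
  have hm := hmaps hvW
  have hv : ∀ y ∉ trivialSubspaces χ, v y = 0 := fun y hy =>
    hvW y fun hyW => hy (mem_trivialSubspaces_of_le hW.1 hyW)
  exact ⟨LoneT_mulVec_Theta hHc hHu hxH hW hv hχH, LtwoT_mulVec_Theta hHc hHu hxH hW hv hχH,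
    LthreeT_mulVec_eq_zero hHc hxH hχH hm, RoneT_mulVec_Theta hHc hHu hxH hW hv,
    RtwoT_mulVec_Theta hHc hHu hxH hW hv, RthreeT_mulVec_eq_zero hHc hχH hm,
    fun _ _ _ _ => EstarT_zero_mulVec_eq_zero hχH hm, fun _ _ => EstarT_zero_mulVec_eq_zero hχH hm,
    fun _ _ => EstarT_mulVec_eq_zero_of_finrank_eq (congrArg _ hx) hxH hχx hm,
    fun _ _ _ _ => EstarT_one_mulVec_Theta hHc hHu hxH hW hv⟩
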